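/- A group S is discrete p-toral (i.e., has a normal subgroup S₀ isomorphic to a finite direct product of copies of ℤ/p^∞ with S/S₀ a finite p-group) if and only if S is artinian (every descending chain of subgroups stabilizes) and every finitely generated subgroup of S is a finite p-group. -/

import Mathlib

/-- ℚ/ℤ as an additive group. -/
abbrev QmodZ : Type := ℚ ⧸ AddSubgroup.zmultiples (1 : ℚ)

/-- The Prüfer p-group ℤ/p^∞, realized as the p-primary component of ℚ/ℤ,
written multiplicatively. -/
def Prufer (p : ℕ) [Fact p.Prime] : Type :=
  Multiplicative (AddCommGroup.primaryComponent QmodZ p)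

instance (p : ℕ) [Fact p.Prime] : CommGroup (Prufer p) :=
  Multiplicative.commGroup

/-- A group `S` is *discrete p-toral* if it has a normal subgroup `S₀` isomorphic to a
finite direct product of copies of `ℤ/p^∞` such that `S/S₀` is a finite `p`-group. -/
def IsDiscretePToral (p : ℕ) [Fact p.Prime] (S : Type*) [Group S] : Prop :=
  ∃ S₀ : Subgroup S, ∃ _ : S₀.Normal,
    (∃ r : ℕ, Nonempty (S₀ ≃* (Fin r → Prufer p))) ∧
    Finite (S ⧸ S₀) ∧ IsPGroup p (S ⧸ S₀)

/-- A group is artinian if every descending sequence of subgroups is eventually constant. -/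
def SubgroupArtinian (S : Type*) [Group S] : Prop :=
  ∀ f : ℕ → Subgroup S, (∀ n, f (n + 1) ≤ f n) → ∃ n, ∀ m, n ≤ m → f m = f n

/-!
Both finiteness conditions pass through extensions, so for a discrete `p`-toral group it suffices to
look at the Prüfer group, whose proper subgroups are finite.

Conversely, an artinian group has a least subgroup `N` of finite index, and `N` has no proper
subgroup of finite index. Suppose every finitely generated subgroup of `N` is a finite `p`-group.
By minimality the center of `N` is the centralizer of a finitely generated subgroup `H`; enlarging
`H`, it contains the center of a nontrivial finite `p`-group, so it is nontrivial as soon as `N` is,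
and the same applies to the quotients of `N`. On the other hand `N ⧸ Z(N)` has trivial center: if
`x` is central modulo `Z(N)`, the commutators `⁅t, x⁆` lie in the `orderOf x`-torsion of `Z(N)`,
which is finite, so the centralizer of `x` has finite index and is all of `N`. Hence `N` is abelian.

The `n`-th powers in `N` have finite index, so `N` is divisible, hence injective. An isomorphism
between the `p`-torsion of `(ℤ/p^∞)^r` and that of `N` therefore extends to a homomorphism, which is
bijective because both groups are divisible `p`-groups.
-/

open scoped commutatorElement IsMulCommutative

section Artinian

variable {G G' : Type*} [Group G] [Group G']

theorem subgroupArtinian_iff_wellFoundedLT : SubgroupArtinian G ↔ WellFoundedLT (Subgroup G) := by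
  rw [← wellFoundedGT_dual_iff, wellFoundedGT_iff_monotone_chain_condition]
  constructor
  · intro h a
    obtain ⟨n, hn⟩ := h (fun n => OrderDual.ofDual (a n)) fun n => a.monotone n.le_succ
    exact ⟨n, fun m hm => (hn m hm).symm⟩
  · intro h f hf
    obtain ⟨n, hn⟩ := h ⟨fun n => OrderDual.toDual (f n), monotone_nat_of_le_succ hf⟩
    exact ⟨n, fun m hm => (hn m hm).symm⟩

theorem wellFoundedLT_subgroup_of_injective [WellFoundedLT (Subgroup G')] (f : G →* G')
    (hf : Function.Injective f) : WellFoundedLT (Subgroup G) :=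
  StrictMono.wellFoundedLT (f := Subgroup.map f) fun _ _ =>
    (Subgroup.map_lt_map_iff_of_injective hf).2

theorem wellFoundedLT_subgroup_of_surjective [WellFoundedLT (Subgroup G)] (f : G →* G')
    (hf : Function.Surjective f) : WellFoundedLT (Subgroup G') :=
  StrictMono.wellFoundedLT (f := Subgroup.comap f) fun _ _ =>
    (Subgroup.comap_lt_comap_of_surjective hf).2

theorem eq_of_le_of_subgroupOf_ker_eq_of_map_eq (f : G →* G') {H K : Subgroup G} (hHK : H ≤ K)
    (hker : H.subgroupOf f.ker = K.subgroupOf f.ker) (hmap : H.map f = K.map f) : H = K := by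
  refine hHK.antisymm fun x hx => ?_
  obtain ⟨y, hy, hyx⟩ : f x ∈ H.map f := hmap ▸ Subgroup.mem_map_of_mem f hx
  have hyx_ker : y⁻¹ * x ∈ f.ker := by simp [MonoidHom.mem_ker, hyx]
  have hyx_mem : (⟨y⁻¹ * x, hyx_ker⟩ : f.ker) ∈ H.subgroupOf f.ker :=
    hker ▸ K.mul_mem (K.inv_mem (hHK hy)) hx
  simpa using H.mul_mem hy hyx_mem

theorem wellFoundedLT_subgroup_of_ker (f : G →* G') [WellFoundedLT (Subgroup f.ker)]
    [WellFoundedLT (Subgroup G')] : WellFoundedLT (Subgroup G) := by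
  have hmono : StrictMono fun H : Subgroup G => (H.subgroupOf f.ker, H.map f) := fun H K hHK =>
    lt_of_le_of_ne ⟨Subgroup.comap_mono hHK.le, Subgroup.map_mono hHK.le⟩ fun h =>
      hHK.ne (eq_of_le_of_subgroupOf_ker_eq_of_map_eq f hHK.le (congrArg Prod.fst h)
        (congrArg Prod.snd h))
  exact hmono.wellFoundedLT

theorem wellFoundedLT_subgroup_pi {ι : Type*} [Finite ι] (M : ι → Type*) [∀ i, Group (M i)]
    [∀ i, WellFoundedLT (Subgroup (M i))] : WellFoundedLT (Subgroup (∀ i, M i)) := by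
  induction ι using Finite.induction_empty_option with
  | of_equiv e ih =>
    have := ih fun a => M (e a)
    exact wellFoundedLT_subgroup_of_injective
      (MonoidHom.pi fun a => Pi.evalMonoidHom M (e a)) fun x y hxy =>
        funext fun b => e.apply_symm_apply b ▸ congrFun hxy (e.symm b)
  | h_empty => infer_instance
  | @h_option ι _ ih =>
    let f : (∀ i, M i) →* ∀ i, M (some i) := MonoidHom.pi fun i => Pi.evalMonoidHom M (some i)
    have := ih fun i => M (some i)
    have hker : Function.Injective ((Pi.evalMonoidHom M none).comp f.ker.subtype) := by
      refine fun x y hxy => Subtype.ext (funext fun i => ?_)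
      cases i with
      | none => exact hxy
      | some i => exact (congrFun x.2 i).trans (congrFun y.2 i).symm
    have := wellFoundedLT_subgroup_of_injective _ hker
    exact wellFoundedLT_subgroup_of_ker f

theorem isMulTorsion_of_wellFoundedLT [WellFoundedLT (Subgroup G)] : IsMulTorsion G := by
  intro x
  obtain ⟨n, hn⟩ := subgroupArtinian_iff_wellFoundedLT.2 ‹WellFoundedLT (Subgroup G)›
    (fun n => Subgroup.zpowers (x ^ 2 ^ n)) fun n => by
      rw [Subgroup.zpowers_le, pow_succ, pow_mul]
      exact Subgroup.npow_mem_zpowers _ _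
  obtain ⟨k, hk⟩ : x ^ 2 ^ n ∈ Subgroup.zpowers (x ^ 2 ^ (n + 1)) :=
    (hn (n + 1) n.le_succ).ge (Subgroup.mem_zpowers _)
  have hne : (2 ^ n * (2 * k - 1) : ℤ) ≠ 0 := mul_ne_zero (by positivity) (by lia)
  refine isOfFinOrder_iff_zpow_eq_one.2 ⟨_, hne, ?_⟩
  have hk : x ^ (2 ^ (n + 1) * k : ℤ) = x ^ (2 ^ n : ℤ) := by
    rw [zpow_mul]
    exact_mod_cast hk
  rw [mul_sub_one, ← mul_assoc, ← pow_succ, zpow_sub, hk, mul_inv_cancel]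

end Artinian

theorem fg_zpowers {G : Type*} [Group G] (g : G) : (Subgroup.zpowers g).FG :=
  ⟨{g}, by rw [Finset.coe_singleton, Subgroup.zpowers_eq_closure]⟩

/-- A group is locally finite if its finitely generated subgroups are finite. For this
condition extensions are easier to handle than for the combined one on finite `p`-groups. -/
def IsLocallyFiniteGroup (G : Type*) [Group G] : Prop :=
  ∀ H : Subgroup G, H.FG → Finite H

namespace IsLocallyFiniteGroup

variable {G G' : Type*} [Group G] [Group G']

theorem finite [hfg : Group.FG G] (hG : IsLocallyFiniteGroup G) : Finite G :=
  have : Finite (⊤ : Subgroup G) := hG ⊤ (Group.fg_def.1 hfg)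
  Finite.of_equiv _ Subgroup.topEquiv.toEquiv

theorem of_finite [Finite G] : IsLocallyFiniteGroup G := fun _ _ => inferInstance

theorem of_injective (hG' : IsLocallyFiniteGroup G') (f : G →* G') (hf : Function.Injective f) :
    IsLocallyFiniteGroup G := fun H hH =>
  have : Group.FG H := (Group.fg_iff_subgroup_fg H).2 hH
  have : Finite (H.map f) := hG' _ <|
    (Group.fg_iff_subgroup_fg _).1 (Group.fg_of_surjective (f.subgroupMap_surjective H))
  Finite.of_equiv _ (H.equivMapOfInjective f hf).symm.toEquiv

theorem of_surjective (hG : IsLocallyFiniteGroup G) (f : G →* G') (hf : Function.Surjective f) :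
    IsLocallyFiniteGroup G' := by
  rintro _ ⟨s, rfl⟩
  classical
  let t := s.image (Function.surjInv hf)
  have hmap : (Subgroup.closure (t : Set G)).map f = Subgroup.closure s := by
    simp only [MonoidHom.map_closure, t, Finset.coe_image, Set.image_image, Function.surjInv_eq,
      Set.image_id']
  have : Finite (Subgroup.closure (t : Set G)) := hG _ ⟨t, rfl⟩
  exact hmap ▸ Finite.of_surjective _ (f.subgroupMap_surjective _)

theorem of_ker (f : G →* G') (hker : IsLocallyFiniteGroup f.ker) (hG' : IsLocallyFiniteGroup G') :
    IsLocallyFiniteGroup G := by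
  intro H hH
  have : Group.FG H := (Group.fg_iff_subgroup_fg H).2 hH
  let φ : H →* G' := f.comp H.subtype
  have : Finite φ.range := hG' _ ((Group.fg_iff_subgroup_fg _).1 inferInstance)
  have hinj : Function.Injective ((H.subtype.comp φ.ker.subtype).codRestrict f.ker fun x => x.2) :=
    fun x y hxy => Subtype.ext (Subtype.ext (congrArg (fun z : f.ker => (z : G)) hxy))
  have : Group.FG φ.ker := inferInstance
  have hfin : Finite φ.ker := (hker.of_injective _ hinj).finite
  exact (φ.ker.finite_iff_finite_and_finiteIndex).2 ⟨hfin, inferInstance⟩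

theorem of_isMulTorsion {A : Type*} [CommGroup A] (hA : IsMulTorsion A) :
    IsLocallyFiniteGroup A := fun H hH =>
  have : Group.FG H := (Group.fg_iff_subgroup_fg H).2 hH
  CommGroup.finite_of_fg_isMulTorsion H fun x => Submonoid.isOfFinOrder_coe.1 (hA x)

end IsLocallyFiniteGroup

theorem forall_fg_finite_isPGroup_iff {p : ℕ} {G : Type*} [Group G] :
    (∀ H : Subgroup G, H.FG → Finite H ∧ IsPGroup p H) ↔ IsLocallyFiniteGroup G ∧ IsPGroup p G := by
  refine ⟨fun h => ⟨fun H hH => (h H hH).1, fun g => ?_⟩,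
    fun h H hH => ⟨h.1 H hH, h.2.to_subgroup H⟩⟩
  obtain ⟨k, hk⟩ := (h _ (fg_zpowers g)).2 ⟨g, Subgroup.mem_zpowers g⟩
  exact ⟨k, congrArg Subtype.val hk⟩

section Bounded

variable {A : Type*} [CommGroup A] [WellFoundedLT (Subgroup A)] {n : ℕ}

theorem finite_of_forall_pow_eq_one (hn : n ≠ 0) (h : ∀ a : A, a ^ n = 1) : Finite A := by
  have : NeZero n := ⟨hn⟩
  let : Module (ZMod n) (Additive A) := AddCommGroup.zmodModule (n := n) h
  have hmono : StrictMono fun M : Submodule (ZMod n) (Additive A) =>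
      AddSubgroup.toSubgroup' M.toAddSubgroup :=
    (OrderIso.strictMono _).comp Submodule.toAddSubgroup_strictMono
  have : IsArtinian (ZMod n) (Additive A) := hmono.wellFoundedLT
  have : Module.Finite (ZMod n) (Additive A) :=
    (IsArtinianRing.tfae (ZMod n) (Additive A)).out 2 0 |>.1 this
  exact Finite.of_equiv _ (Additive.toMul (α := A)) (h := Module.finite_of_finite (ZMod n))

theorem finite_ker_powMonoidHom (hn : n ≠ 0) : Finite (powMonoidHom n : A →* A).ker :=
  have := wellFoundedLT_subgroup_of_injective (powMonoidHom n : A →* A).ker.subtype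
    Subtype.val_injective
  finite_of_forall_pow_eq_one hn fun a => Subtype.ext a.2

theorem finiteIndex_range_powMonoidHom (hn : n ≠ 0) :
    (powMonoidHom n : A →* A).range.FiniteIndex := by
  let R := (powMonoidHom n : A →* A).range
  have := wellFoundedLT_subgroup_of_surjective _ (QuotientGroup.mk'_surjective R)
  have : Finite (A ⧸ R) := finite_of_forall_pow_eq_one hn fun x => by
    induction x using QuotientGroup.induction_on with
    | H a => exact (QuotientGroup.eq_one_iff _).2 ⟨a, rfl⟩
  exact Subgroup.finiteIndex_of_finite_quotient

end Bounded

/-- `G` is the only subgroup of finite index in `G`. In an artinian group the least subgroup of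
finite index has this property; it plays the role of an identity component. -/
def HasNoProperFiniteIndexSubgroup (G : Type*) [Group G] : Prop :=
  ∀ H : Subgroup G, H.FiniteIndex → H = ⊤

theorem exists_normal_finiteIndex_hasNoProperFiniteIndexSubgroup (G : Type*) [Group G]
    [WellFoundedLT (Subgroup G)] :
    ∃ N : Subgroup G, N.Normal ∧ N.FiniteIndex ∧ HasNoProperFiniteIndexSubgroup N := by
  obtain ⟨N, hN, hmin⟩ := wellFounded_lt.has_min {N : Subgroup G | N.FiniteIndex}
    ⟨⊤, inferInstanceAs (⊤ : Subgroup G).FiniteIndex⟩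
  have hN : N.FiniteIndex := hN
  have heq : ∀ H : Subgroup G, H.FiniteIndex → H ≤ N → H = N := fun H hH hle =>
    eq_of_le_of_not_lt hle (hmin H hH)
  refine ⟨N, ?_, hN, fun H hH => ?_⟩
  · rw [← heq _ inferInstance N.normalCore_le]
    infer_instance
  · have hmap : H.map N.subtype = N := heq _
      ⟨by rw [Subgroup.index_map_subtype]; exact mul_ne_zero hH.1 hN.1⟩ (Subgroup.map_subtype_le H)
    exact Subgroup.map_injective N.subtype_injective <|
      hmap.trans (by rw [← MonoidHom.range_eq_map, Subgroup.range_subtype])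

namespace HasNoProperFiniteIndexSubgroup

variable {G : Type*} [Group G]

theorem surjective_pow {A : Type*} [CommGroup A] [WellFoundedLT (Subgroup A)]
    (hA : HasNoProperFiniteIndexSubgroup A) {n : ℕ} (hn : n ≠ 0) :
    Function.Surjective fun a : A => a ^ n :=
  MonoidHom.range_eq_top.1 (hA _ (finiteIndex_range_powMonoidHom hn))

theorem mem_center_of_finite_range_commutator (hG : HasNoProperFiniteIndexSubgroup G) {x : G}
    (hx : (Set.range fun t : G => ⁅t, x⁆).Finite) : x ∈ Subgroup.center G := by
  have : Finite (Set.range fun t : G => ⁅t, x⁆) := hx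
  let f (q : G ⧸ Subgroup.centralizer {x}) : Set.range fun t : G => ⁅t, x⁆ :=
    ⟨Subgroup.quotientCentralizerEmbedding x q, by
      obtain ⟨t, rfl⟩ := QuotientGroup.mk_surjective q
      exact ⟨t, rfl⟩⟩
  have hf : Function.Injective f := fun q q' h =>
    (Subgroup.quotientCentralizerEmbedding x).injective
      (Subtype.ext (congrArg (fun z : Set.range fun t : G => ⁅t, x⁆ => (z : G)) h))
  have : Finite (G ⧸ Subgroup.centralizer {x}) := Finite.of_injective f hf
  exact Set.singleton_subset_iff.1 <| Subgroup.centralizer_eq_top_iff_subset.1 <|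
    hG _ Subgroup.finiteIndex_of_finite_quotient

theorem center_quotient_center_eq_bot [WellFoundedLT (Subgroup G)]
    (hG : HasNoProperFiniteIndexSubgroup G) :
    Subgroup.center (G ⧸ Subgroup.center G) = ⊥ := by
  refine (Subgroup.eq_bot_iff_forall _).2 fun q hq => ?_
  obtain ⟨x, rfl⟩ := QuotientGroup.mk_surjective q
  refine (QuotientGroup.eq_one_iff x).2 (hG.mem_center_of_finite_range_commutator ?_)
  have hcomm (t : G) : ⁅t, x⁆ ∈ Subgroup.center G := by
    rw [← QuotientGroup.ker_mk' (Subgroup.center G), MonoidHom.mem_ker, map_commutatorElement]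
    exact commutatorElement_eq_one_iff_mul_comm.2 (Subgroup.mem_center_iff.1 hq t)
  have hpow (t : G) : ⁅t, x⁆ ^ orderOf x = 1 := by
    have hconj : t * x * t⁻¹ = ⁅t, x⁆ * x := by simp [commutatorElement_def]
    have hx : (⁅t, x⁆ * x) ^ orderOf x = 1 := by
      rw [← hconj, conj_pow, pow_orderOf_eq_one, mul_one, mul_inv_cancel]
    have : Commute ⁅t, x⁆ x := ((Subgroup.mem_center_iff.1 (hcomm t)) x).symm
    rwa [this.mul_pow, pow_orderOf_eq_one, mul_one] at hx
  have := wellFoundedLT_subgroup_of_injective (Subgroup.center G).subtype Subtype.val_injective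
  have hfin := finite_ker_powMonoidHom (A := Subgroup.center G)
    (isMulTorsion_of_wellFoundedLT x).orderOf_pos.ne'
  exact (Set.finite_range fun z : (powMonoidHom (orderOf x) :
    Subgroup.center G →* Subgroup.center G).ker => (z : G)).subset <|
      Set.range_subset_iff.2 fun t => ⟨⟨⟨⁅t, x⁆, hcomm t⟩, Subtype.ext (hpow t)⟩, rfl⟩

end HasNoProperFiniteIndexSubgroup

section LocallyFinitePGroup

variable {p : ℕ} {G : Type*} [Group G] [WellFoundedLT (Subgroup G)]

theorem exists_fg_centralizer_eq_center (G : Type*) [Group G] [WellFoundedLT (Subgroup G)] :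
    ∃ H : Subgroup G, H.FG ∧ Subgroup.centralizer (H : Set G) = Subgroup.center G := by
  obtain ⟨-, ⟨H, hH, rfl⟩, hmin⟩ := wellFounded_lt.has_min
    ((fun H : Subgroup G => Subgroup.centralizer (H : Set G)) '' {H | H.FG})
    ⟨_, ⊥, Subgroup.FG.bot, rfl⟩
  refine ⟨H, hH, le_antisymm (fun x hx => Subgroup.mem_center_iff.2 fun g => ?_)
    (Subgroup.center_le_centralizer _)⟩
  let K := H ⊔ Subgroup.zpowers g
  have hK : K.FG := hH.sup (fg_zpowers g)
  have heq : Subgroup.centralizer (K : Set G) = Subgroup.centralizer H :=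
    eq_of_le_of_not_lt (Subgroup.centralizer_le (le_sup_left : H ≤ K)) (hmin _ ⟨K, hK, rfl⟩)
  have hgK : g ∈ K := le_sup_right (a := H) (Subgroup.mem_zpowers g)
  exact Subgroup.mem_centralizer_iff.1 (heq ▸ hx) g hgK

theorem nontrivial_center_of_isPGroup [Fact p.Prime] [Nontrivial G] (hG : IsLocallyFiniteGroup G)
    (hp : IsPGroup p G) : Nontrivial (Subgroup.center G) := by
  obtain ⟨H, hH, hcenter⟩ := exists_fg_centralizer_eq_center G
  obtain ⟨g, hg⟩ := exists_ne (1 : G)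
  let K := H ⊔ Subgroup.zpowers g
  have hgK : g ∈ K := le_sup_right (a := H) (Subgroup.mem_zpowers g)
  have : Finite K := hG K (hH.sup (fg_zpowers g))
  have : Nontrivial K := ⟨⟨g, hgK⟩, 1, fun h => hg (congrArg Subtype.val h)⟩
  have := (hp.to_subgroup K).center_nontrivial
  obtain ⟨z, hz⟩ := exists_ne (1 : Subgroup.center K)
  have hzG : (z : G) ∈ Subgroup.center G := hcenter ▸ Subgroup.mem_centralizer_iff.2 fun h hh =>
    congrArg Subtype.val (Subgroup.mem_center_iff.1 z.2 ⟨h, le_sup_left (a := H) hh⟩)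
  exact ⟨⟨z, hzG⟩, 1, fun h => hz <| Subtype.ext <| Subtype.ext <|
    congrArg (fun w : Subgroup.center G => (w : G)) h⟩

theorem center_eq_top_of_isPGroup [Fact p.Prime] (hG : IsLocallyFiniteGroup G) (hp : IsPGroup p G)
    (hindex : HasNoProperFiniteIndexSubgroup G) : Subgroup.center G = ⊤ := by
  by_contra hZ
  have hmk := QuotientGroup.mk'_surjective (Subgroup.center G)
  have := wellFoundedLT_subgroup_of_surjective _ hmk
  have : Nontrivial (G ⧸ Subgroup.center G) := QuotientGroup.nontrivial_iff.2 hZ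
  exact (Subgroup.nontrivial_iff_ne_bot _).1
    (nontrivial_center_of_isPGroup (hG.of_surjective _ hmk) (hp.to_quotient _))
    hindex.center_quotient_center_eq_bot

end LocallyFinitePGroup

section DivisiblePGroup

variable {p : ℕ}

theorem nonempty_mulEquiv_of_pow_eq_one [Fact p.Prime] {A B : Type*} [CommGroup A] [CommGroup B]
    [Finite A] [Finite B] (hA : ∀ a : A, a ^ p = 1) (hB : ∀ b : B, b ^ p = 1)
    (h : Nat.card A = Nat.card B) : Nonempty (A ≃* B) := by
  let : Module (ZMod p) (Additive A) := AddCommGroup.zmodModule (n := p) hA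
  let : Module (ZMod p) (Additive B) := AddCommGroup.zmodModule (n := p) hB
  have hA_card : Nat.card A = _ := Module.natCard_eq_pow_finrank (K := ZMod p) (V := Additive A)
  have hB_card : Nat.card B = _ := Module.natCard_eq_pow_finrank (K := ZMod p) (V := Additive B)
  rw [hA_card, hB_card, Nat.card_zmod] at h
  obtain ⟨e⟩ := FiniteDimensional.nonempty_linearEquiv_of_finrank_eq
    (Nat.pow_right_injective (Fact.out : p.Prime).two_le h)
  exact ⟨MulEquiv.toAdditive.symm e.toAddEquiv⟩

theorem exists_monoidHom_comp_subtype_eq {A B : Type*} [CommGroup A] [CommGroup B]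
    [RootableBy B ℤ] (H : Subgroup A) (f : H →* B) : ∃ g : A →* B, g.comp H.subtype = f := by
  let : DivisibleBy (Additive B) ℤ := divisibleByOfSMulRightSurj _ _
    fun hn => RootableBy.surjective_pow B ℤ hn
  obtain ⟨g, hg⟩ := (Module.Baer.of_divisible (Additive B)).extension_property_addMonoidHom
    (MonoidHom.toAdditive H.subtype) Subtype.val_injective (MonoidHom.toAdditive f)
  exact ⟨MonoidHom.toAdditive.symm g, MonoidHom.ext fun x => DFunLike.congr_fun hg x⟩

theorem injective_of_isPGroup {G G' : Type*} [Group G] [Group G'] (hG : IsPGroup p G)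
    (f : G →* G') (hf : ∀ x, x ^ p = 1 → f x = 1 → x = 1) : Function.Injective f := by
  refine (injective_iff_map_eq_one f).2 fun x hx => ?_
  obtain ⟨k, hk⟩ := hG x
  induction k generalizing x with
  | zero => simpa using hk
  | succ k ih =>
    exact hf x (ih _ (by rw [map_pow, hx, one_pow]) (by rw [← pow_mul, ← pow_succ', hk])) hx

theorem surjective_of_isPGroup {G B : Type*} [Group G] [CommGroup B] (hB : IsPGroup p B)
    (hG : Function.Surjective fun x : G => x ^ p) (f : G →* B)
    (hf : ∀ b, b ^ p = 1 → b ∈ f.range) : Function.Surjective f := by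
  refine MonoidHom.range_eq_top.1 ((Subgroup.eq_top_iff' _).2 fun b => ?_)
  obtain ⟨k, hk⟩ := hB b
  induction k generalizing b with
  | zero =>
    obtain rfl : b = 1 := by simpa using hk
    exact f.range.one_mem
  | succ k ih =>
    obtain ⟨x, hx⟩ := ih (b ^ p) (by rw [← pow_mul, ← pow_succ', hk])
    obtain ⟨y, rfl⟩ := hG x
    have hmem : b / f y ∈ f.range := hf _ (by rw [div_pow, ← map_pow, hx, div_self'])
    simpa using f.range.mul_mem hmem ⟨y, rfl⟩

theorem nonempty_mulEquiv_of_ker_powMonoidHom {A B : Type*} [CommGroup A] [CommGroup B]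
    [RootableBy B ℤ] (hA : IsPGroup p A) (hB : IsPGroup p B)
    (hpow : Function.Surjective fun a : A => a ^ p)
    (e : (powMonoidHom p : A →* A).ker ≃* (powMonoidHom p : B →* B).ker) :
    Nonempty (A ≃* B) := by
  obtain ⟨g, hg⟩ := exists_monoidHom_comp_subtype_eq _
    ((powMonoidHom p : B →* B).ker.subtype.comp e.toMonoidHom)
  have hge (a : (powMonoidHom p : A →* A).ker) : g a = e a := DFunLike.congr_fun hg a
  refine ⟨MulEquiv.ofBijective g ⟨injective_of_isPGroup hA g fun a ha hga => ?_,
    surjective_of_isPGroup hB hpow g fun b hb => ?_⟩⟩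
  · have hea : e ⟨a, ha⟩ = 1 := Subtype.ext ((hge ⟨a, ha⟩).symm.trans hga)
    exact congrArg Subtype.val ((map_eq_one_iff e e.injective).1 hea)
  · exact ⟨e.symm ⟨b, hb⟩, by rw [hge, MulEquiv.apply_symm_apply]⟩

end DivisiblePGroup

section Pi

variable {ι : Type*} [Finite ι]

theorem isPGroup_pi {p : ℕ} {M : ι → Type*} [∀ i, Group (M i)] (hM : ∀ i, IsPGroup p (M i)) :
    IsPGroup p (∀ i, M i) := fun x => by
  choose k hk using fun i => hM i (x i)
  obtain ⟨m, hm⟩ := Finite.exists_le k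
  exact ⟨m, funext fun i => orderOf_dvd_iff_pow_eq_one.1
    ((orderOf_dvd_of_pow_eq_one (hk i)).trans (pow_dvd_pow p (hm i)))⟩

theorem natCard_ker_powMonoidHom_pi (M : Type*) [CommGroup M] (n : ℕ) :
    Nat.card (powMonoidHom n : (ι → M) →* (ι → M)).ker =
      Nat.card (powMonoidHom n : M →* M).ker ^ Nat.card ι := by
  let e : (powMonoidHom n : (ι → M) →* (ι → M)).ker ≃ (ι → (powMonoidHom n : M →* M).ker) :=
    (Equiv.subtypeEquivRight fun _ => funext_iff).trans
      (Equiv.subtypePiEquivPi (p := fun _ x => x ∈ (powMonoidHom n : M →* M).ker))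
  rw [Nat.card_congr e, Nat.card_fun]

end Pi

theorem wellFoundedLT_subgroup_of_forall_finite {G : Type*} [Group G]
    (hG : ∀ H : Subgroup G, H ≠ ⊤ → Finite H) : WellFoundedLT (Subgroup G) :=
  StrictMono.wellFoundedLT (f := fun H : Subgroup G => (H : Set G).encard) fun H _ hHK =>
    have : Finite H := hG H hHK.ne_top
    Set.Finite.encard_lt_encard (Set.toFinite _) hHK

namespace Prufer

variable (p : ℕ) [Fact p.Prime]

/-- The inclusion of the Prüfer group in ℚ/ℤ. -/
def toQmodZ : Prufer p →* Multiplicative QmodZ :=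
  AddMonoidHom.toMultiplicative (AddCommGroup.primaryComponent QmodZ p).subtype

variable {p}

theorem toQmodZ_injective : Function.Injective (toQmodZ p) := Subtype.val_injective

theorem exists_toQmodZ_eq {y : Multiplicative QmodZ} {k : ℕ} (hy : y ^ p ^ k = 1) :
    ∃ x : Prufer p, toQmodZ p x = y :=
  ⟨Multiplicative.ofAdd ⟨y.toAdd, k, hy⟩, rfl⟩

theorem isPGroup : IsPGroup p (Prufer p) := fun x => by
  obtain ⟨k, hk⟩ := x.toAdd.2
  exact ⟨k, toQmodZ_injective hk⟩

theorem surjective_pow : Function.Surjective fun x : Prufer p => x ^ p := fun x => by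
  obtain ⟨k, hk⟩ := isPGroup x
  obtain ⟨y, hy⟩ : ∃ y : Multiplicative QmodZ, y ^ p = toQmodZ p x := by
    obtain ⟨y, hy⟩ := DivisibleBy.surjective_smul (AddCircle (1 : ℚ)) ℤ
      (Int.natCast_ne_zero.2 (Fact.out : p.Prime).ne_zero) (toQmodZ p x).toAdd
    exact ⟨Multiplicative.ofAdd y, (natCast_zsmul y p).symm.trans hy⟩
  obtain ⟨z, rfl⟩ := exists_toQmodZ_eq (p := p) (k := k + 1) <| by
    rw [pow_succ', pow_mul, hy, ← map_pow, hk, map_one]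
  exact ⟨z, toQmodZ_injective ((map_pow _ _ _).trans hy)⟩

theorem exists_orderOf_eq : ∃ x : Prufer p, orderOf x = p := by
  let y : Multiplicative QmodZ := Multiplicative.ofAdd ((1 / p : ℚ) : AddCircle (1 : ℚ))
  have hy : orderOf y = p := AddCircle.addOrderOf_period_div (Fact.out : p.Prime).pos
  obtain ⟨x, hx⟩ := exists_toQmodZ_eq (p := p) (y := y) (k := 1) <| by
    rw [pow_one, ← orderOf_dvd_iff_pow_eq_one, hy]
  exact ⟨x, by rw [← orderOf_injective _ toQmodZ_injective, hx, hy]⟩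

theorem encard_setOf_pow_eq_one_le {n : ℕ} (hn : n ≠ 0) :
    {x : Prufer p | x ^ n = 1}.encard ≤ n := by
  have hmaps : Set.MapsTo (fun x => (toQmodZ p x).toAdd) {x | x ^ n = 1}
      {y : AddCircle (1 : ℚ) | n • y = 0} := fun x hx =>
    (map_pow (toQmodZ p) x n).symm.trans ((congrArg _ hx).trans (map_one _))
  exact (Set.encard_le_encard_of_injOn hmaps toQmodZ_injective.injOn).trans
    (AddCircle.card_torsion_le_of_isSMulRegular (1 : ℚ) n hn (.of_ne_zero hn))

theorem mem_zpowers_iff_orderOf_dvd {x y : Prufer p} :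
    x ∈ Subgroup.zpowers y ↔ orderOf x ∣ orderOf y := by
  refine ⟨orderOf_dvd_of_mem_zpowers, fun h => ?_⟩
  have hy : IsOfFinOrder y := isPGroup.isOfFinOrder (Fact.out : p.Prime).ne_zero y
  have hfin : (Subgroup.zpowers y : Set (Prufer p)).Finite := finite_zpowers.2 hy
  have hsub : (Subgroup.zpowers y : Set (Prufer p)) ⊆ {z | z ^ orderOf y = 1} :=
    fun z hz => orderOf_dvd_iff_pow_eq_one.1 (orderOf_dvd_of_mem_zpowers hz)
  have hcard : {z : Prufer p | z ^ orderOf y = 1}.encard ≤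
      (Subgroup.zpowers y : Set (Prufer p)).encard := by
    rw [← hfin.cast_ncard_eq, ← Nat.card_coe_set_eq, SetLike.coe_sort_coe, Nat.card_zpowers]
    exact encard_setOf_pow_eq_one_le hy.orderOf_pos.ne'
  exact (hfin.eq_of_subset_of_encard_le hsub hcard).ge (orderOf_dvd_iff_pow_eq_one.1 h)

theorem finite_of_ne_top {H : Subgroup (Prufer p)} (hH : H ≠ ⊤) : Finite H := by
  obtain ⟨y, hy⟩ : ∃ y, y ∉ H := by simpa [Subgroup.eq_top_iff'] using hH
  have hle : H ≤ Subgroup.zpowers y := fun x hx => by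
    obtain ⟨k, hk⟩ := IsPGroup.iff_orderOf.1 isPGroup x
    obtain ⟨l, hl⟩ := IsPGroup.iff_orderOf.1 isPGroup y
    rcases le_total k l with h | h
    · exact mem_zpowers_iff_orderOf_dvd.2 (hk ▸ hl ▸ pow_dvd_pow p h)
    · have hyx : y ∈ Subgroup.zpowers x :=
        mem_zpowers_iff_orderOf_dvd.2 (hk ▸ hl ▸ pow_dvd_pow p h)
      exact absurd (Subgroup.zpowers_le.2 hx hyx) hy
  have : Finite (Subgroup.zpowers y) :=
    finite_zpowers.2 (isPGroup.isOfFinOrder (Fact.out : p.Prime).ne_zero y)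
  exact Finite.of_injective _ (Subgroup.inclusion_injective hle)

theorem wellFoundedLT_subgroup : WellFoundedLT (Subgroup (Prufer p)) :=
  wellFoundedLT_subgroup_of_forall_finite fun _ => finite_of_ne_top

theorem natCard_ker_powMonoidHom : Nat.card (powMonoidHom p : Prufer p →* Prufer p).ker = p := by
  obtain ⟨x, hx⟩ := exists_orderOf_eq (p := p)
  have hker : (powMonoidHom p : Prufer p →* Prufer p).ker = Subgroup.zpowers x := by
    ext y
    rw [mem_zpowers_iff_orderOf_dvd, hx, orderOf_dvd_iff_pow_eq_one]
    rfl
  rw [hker, Nat.card_zpowers, hx]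

end Prufer

section Main

variable {p : ℕ} [Fact p.Prime] {G : Type*} [Group G]

theorem IsDiscretePToral.wellFoundedLT_subgroup (h : IsDiscretePToral p G) :
    WellFoundedLT (Subgroup G) := by
  obtain ⟨N, _, ⟨r, ⟨e⟩⟩, _, -⟩ := h
  have := Prufer.wellFoundedLT_subgroup (p := p)
  have := wellFoundedLT_subgroup_pi fun _ : Fin r => Prufer p
  have : WellFoundedLT (Subgroup (QuotientGroup.mk' N).ker) := by
    rw [QuotientGroup.ker_mk']
    exact wellFoundedLT_subgroup_of_injective e.toMonoidHom e.injective
  exact wellFoundedLT_subgroup_of_ker (QuotientGroup.mk' N)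

theorem IsDiscretePToral.isPGroup (h : IsDiscretePToral p G) : IsPGroup p G := by
  obtain ⟨N, _, ⟨r, ⟨e⟩⟩, -, hquot⟩ := h
  have hN : IsPGroup p N := (isPGroup_pi fun _ => Prufer.isPGroup).of_equiv e.symm
  have htop : IsPGroup p ((⊤ : Subgroup (G ⧸ N)).comap (QuotientGroup.mk' N)) :=
    (hquot.to_subgroup ⊤).comap_of_ker_isPGroup _ (by rwa [QuotientGroup.ker_mk'])
  exact htop.of_equiv Subgroup.topEquiv

theorem IsDiscretePToral.isLocallyFiniteGroup (h : IsDiscretePToral p G) :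
    IsLocallyFiniteGroup G := by
  obtain ⟨N, _, ⟨r, ⟨e⟩⟩, _, -⟩ := h
  refine .of_ker (QuotientGroup.mk' N) ?_ .of_finite
  rw [QuotientGroup.ker_mk']
  refine .of_injective (.of_isMulTorsion ?_) e.toMonoidHom e.injective
  exact (isPGroup_pi fun _ => Prufer.isPGroup).isOfFinOrder (Fact.out : p.Prime).ne_zero

theorem exists_mulEquiv_pi_prufer {A : Type*} [CommGroup A] [WellFoundedLT (Subgroup A)]
    (hA : IsPGroup p A) (hindex : HasNoProperFiniteIndexSubgroup A) :
    ∃ r : ℕ, Nonempty (A ≃* (Fin r → Prufer p)) := by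
  have hp : p ≠ 0 := (Fact.out : p.Prime).ne_zero
  have : Finite (powMonoidHom p : A →* A).ker := finite_ker_powMonoidHom hp
  obtain ⟨r, hr⟩ := IsPGroup.iff_card.1 (hA.to_subgroup (powMonoidHom p : A →* A).ker)
  have hcard : Nat.card (powMonoidHom p : (Fin r → Prufer p) →* _).ker = p ^ r := by
    rw [natCard_ker_powMonoidHom_pi, Prufer.natCard_ker_powMonoidHom, Nat.card_fin]
  have := Nat.finite_of_card_ne_zero (hcard ▸ pow_ne_zero r hp)
  obtain ⟨e⟩ := nonempty_mulEquiv_of_pow_eq_one (fun x => Subtype.ext x.2)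
    (fun x => Subtype.ext x.2) (hcard.trans hr.symm)
  let : RootableBy A ℕ := rootableByOfPowLeftSurj A ℕ hindex.surjective_pow
  let : RootableBy A ℤ := Group.rootableByIntOfRootableByNat A
  have hpow : Function.Surjective fun x : Fin r → Prufer p => x ^ p :=
    Function.Surjective.piMap fun _ => Prufer.surjective_pow
  obtain ⟨e⟩ := nonempty_mulEquiv_of_ker_powMonoidHom (isPGroup_pi fun _ => Prufer.isPGroup) hA
    hpow e
  exact ⟨r, ⟨e.symm⟩⟩

theorem IsLocallyFiniteGroup.isDiscretePToral [WellFoundedLT (Subgroup G)]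
    (hG : IsLocallyFiniteGroup G) (hp : IsPGroup p G) : IsDiscretePToral p G := by
  obtain ⟨N, hN, _, hindex⟩ := exists_normal_finiteIndex_hasNoProperFiniteIndexSubgroup G
  have := wellFoundedLT_subgroup_of_injective N.subtype N.subtype_injective
  have hNp := hp.to_subgroup N
  let : CommGroup N := Group.commGroupOfCenterEqTop <|
    center_eq_top_of_isPGroup (hG.of_injective N.subtype N.subtype_injective) hNp hindex
  exact ⟨N, hN, exists_mulEquiv_pi_prufer hNp hindex, inferInstance, hp.to_quotient N⟩

end Main

/-- A group is discrete `p`-toral if and only if it is artinian and every finitely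
generated subgroup is a finite `p`-group. -/
theorem isDiscretePToral_iff_artinian_and_fg_finite_pGroup
    (p : ℕ) [Fact p.Prime] (S : Type*) [Group S] :
    IsDiscretePToral p S ↔
      (SubgroupArtinian S ∧ ∀ H : Subgroup S, H.FG → Finite H ∧ IsPGroup p H) := by
  rw [subgroupArtinian_iff_wellFoundedLT, forall_fg_finite_isPGroup_iff]
  constructor
  · exact fun h => ⟨h.wellFoundedLT_subgroup, h.isLocallyFiniteGroup, h.isPGroup⟩
  · rintro ⟨_, hfin, hp⟩
    exact hfin.isDiscretePToral hp
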